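/- Let D be an ADF and define the sequence of interpretations v_0 = v_u and v_{i+1} = Γ_D(v_i). Then for every i ∈ ℕ, the interpretation v_i is a strongly admissible interpretation of D. -/

import Mathlib

/-!
Strong admissibility is preserved by `Γ_D`, and the trivial interpretation is vacuously strongly
admissible.

Let `v` be strongly admissible. Then `v ≤_i Γ_D(v)`, and justifications survive the passage to a
larger interpretation, so only an argument `a` that is undecided in `v` and decided in `Γ_D(v)`
needs a new justification. Its parents decided in `v` provide one, because `φ_a` is determined by
the values of the parents of `a`. Each of them is justified in `v`, and since `a` is undecided in
`v` it occurs in none of these justifications, so excluding `a` costs nothing.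
-/

/-- Three truth values: true, false, undecided. -/
inductive TV : Type
  | t | f | u
deriving DecidableEq, Repr

/-- The information order on truth values: u <_i t and u <_i f. -/
def TV.ile (x y : TV) : Prop := x = TV.u ∨ x = y

/-- The information order on interpretations, extended pointwise. -/
def ILE {A : Type*} (v w : A → TV) : Prop := ∀ a, TV.ile (v a) (w a)

/-- An abstract dialectical framework on a set of arguments `A`:
each argument `a` has an acceptance condition `C a : (A → Bool) → Bool`. -/
structure ADF (A : Type*) where
  C : A → (A → Bool) → Bool

/-- The trivial interpretation mapping every argument to undecided. -/
def trivialInterp (A : Type*) : A → TV := fun _ => TV.u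

/-- The parents of `a` are the arguments on which its acceptance condition depends. -/
def ADF.parents {A : Type*} [DecidableEq A] (D : ADF A) (a : A) : Set A :=
  {b | ∃ w : A → Bool, D.C a w ≠ D.C a (Function.update w b (!w b))}

/-- A two-valued assignment `w` completes a three-valued interpretation `v`. -/
def Completes {A : Type*} (w : A → Bool) (v : A → TV) : Prop :=
  ∀ b, (v b = TV.t → w b = true) ∧ (v b = TV.f → w b = false)

/-- `φ` is irrefutable under `v`: every completion of `v` makes `φ` true. -/
def Irrefutable {A : Type*} (φ : (A → Bool) → Bool) (v : A → TV) : Prop :=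
  ∀ w : A → Bool, Completes w v → φ w = true

/-- `φ` is unsatisfiable under `v`: every completion of `v` makes `φ` false. -/
def Unsat {A : Type*} (φ : (A → Bool) → Bool) (v : A → TV) : Prop :=
  ∀ w : A → Bool, Completes w v → φ w = false

open Classical in
/-- The characteristic operator Γ_D of an ADF. -/
noncomputable def Gamma {A : Type*} (D : ADF A) (v : A → TV) : A → TV := fun a =>
  if Irrefutable (D.C a) v then TV.t
  else if Unsat (D.C a) v then TV.f
  else TV.u

open Classical in
/-- `v|_P`: agrees with `v` on `P` and is undecided elsewhere. -/
noncomputable def restrictTV {A : Type*} (v : A → TV) (P : Set A) : A → TV :=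
  fun b => if b ∈ P then v b else TV.u

/-- Strong acceptability/deniability of an argument with respect to interpretation `v`
and set `S`, relative to an excluded set `E` (the first index). An argument `a` with
`v a = t` (resp. `v a = f`) is strongly acceptable (resp. strongly deniable) iff there is
`P ⊆ (parents a ∩ S) \ E` with `φ_a^{v|_P}` irrefutable (resp. unsatisfiable) and every
`p ∈ P` strongly acceptable/deniable relative to `E ∪ {p}`. -/
inductive SJrel {A : Type*} [DecidableEq A] (D : ADF A) (v : A → TV) (S : Set A) :
    Set A → A → Prop
  | acc (E : Set A) (a : A) (P : Set A)
      (ha : v a = TV.t)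
      (hP : P ⊆ (D.parents a ∩ S) \ E)
      (hirr : Irrefutable (D.C a) (restrictTV v P))
      (hrec : ∀ p ∈ P, SJrel D v S (E ∪ {p}) p) : SJrel D v S E a
  | den (E : Set A) (a : A) (P : Set A)
      (ha : v a = TV.f)
      (hP : P ⊆ (D.parents a ∩ S) \ E)
      (hunsat : Unsat (D.C a) (restrictTV v P))
      (hrec : ∀ p ∈ P, SJrel D v S (E ∪ {p}) p) : SJrel D v S E a

/-- `a` is strongly acceptable/deniable w.r.t. `v` and `S`
(i.e., relative to the excluded set `{a}`). -/
def StronglyJustified {A : Type*} [DecidableEq A] (D : ADF A) (v : A → TV)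
    (S : Set A) (a : A) : Prop :=
  SJrel D v S {a} a

/-- `S` is a least set for `a` with respect to `v`. -/
def LeastSet {A : Type*} [DecidableEq A] (D : ADF A) (v : A → TV)
    (a : A) (S : Set A) : Prop :=
  StronglyJustified D v S a ∧
  ∀ S' : Set A, S'.ncard < S.ncard → ¬ StronglyJustified D v S' a

/-- An interpretation is strongly admissible iff every argument assigned `t`/`f`
is strongly acceptable/deniable w.r.t. `v` and some set `S`. -/
def StronglyAdmissible {A : Type*} [DecidableEq A] (D : ADF A) (v : A → TV) : Prop :=
  ∀ a : A, v a ≠ TV.u → ∃ S : Set A, StronglyJustified D v S a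

/-- `g` is the grounded interpretation of `D`: the least fixed point of `Γ_D`. -/
def IsGrounded {A : Type*} (D : ADF A) (g : A → TV) : Prop :=
  Gamma D g = g ∧ ∀ w : A → TV, Gamma D w = w → ILE g w

/-- An interpretation is admissible iff `v ≤_i Γ_D(v)`. -/
def Admissible {A : Type*} (D : ADF A) (v : A → TV) : Prop :=
  ILE v (Gamma D v)

/-- An interpretation is conflict-free. -/
def ConflictFree {A : Type*} (D : ADF A) (v : A → TV) : Prop :=
  ∀ a : A, (v a = TV.t → ∃ w : A → Bool, Completes w v ∧ D.C a w = true) ∧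
           (v a = TV.f → Unsat (D.C a) v)

/-- The join of two interpretations: take `v`'s value where defined, else `w`'s. -/
def joinI {A : Type*} (v w : A → TV) : A → TV :=
  fun a => if v a = TV.u then w a else v a

section Information

variable {A : Type*} {v v' : A → TV} {a : A}

theorem ILE.eq_of_ne_u (h : ILE v v') (ha : v a ≠ TV.u) : v' a = v a :=
  ((h a).resolve_left ha).symm

theorem restrictTV_ile (v : A → TV) (P : Set A) : ILE (restrictTV v P) v := by
  intro b
  by_cases hb : b ∈ P
  · exact Or.inr (if_pos hb)
  · exact Or.inl (if_neg hb)

theorem restrictTV_mono {P Q : Set A} (h : ILE v v') (hPQ : ∀ b ∈ P, v b ≠ TV.u → b ∈ Q) :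
    ILE (restrictTV v P) (restrictTV v' Q) := by
  intro b
  by_cases hb : b ∈ P ∧ v b ≠ TV.u
  · exact Or.inr (by simp [restrictTV, hb.1, hPQ b hb.1 hb.2, h.eq_of_ne_u hb.2])
  · left
    simpa [restrictTV] using hb

end Information

section Completions

variable {A : Type*} {v v' : A → TV} {w : A → Bool}

theorem exists_completes (v : A → TV) : ∃ w : A → Bool, Completes w v :=
  ⟨fun b => decide (v b = TV.t), fun b => by cases h : v b <;> simp [h]⟩

theorem Completes.of_ile (hw : Completes w v') (h : ILE v v') : Completes w v := by
  intro b
  rcases h b with hb | hb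
  · simp [hb]
  · exact hb ▸ hw b

theorem Completes.exists_eqOn_of_restrictTV {s : Set A} (hw : Completes w (restrictTV v s)) :
    ∃ w', Completes w' v ∧ Set.EqOn w w' s := by
  classical
  obtain ⟨w₀, hw₀⟩ := exists_completes v
  refine ⟨s.piecewise w w₀, fun b => ?_, (s.piecewise_eqOn w w₀).symm⟩
  by_cases hb : b ∈ s
  · simpa [restrictTV, hb] using hw b
  · simpa [hb] using hw₀ b

end Completions

section CharacteristicOperator

variable {A : Type*} {D : ADF A} {v v' : A → TV} {a : A}

theorem gamma_eq_t_iff : Gamma D v a = TV.t ↔ Irrefutable (D.C a) v := by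
  unfold Gamma
  split_ifs <;> simp_all

theorem gamma_eq_f_iff : Gamma D v a = TV.f ↔ Unsat (D.C a) v := by
  have not_both (hi : Irrefutable (D.C a) v) : ¬ Unsat (D.C a) v := by
    obtain ⟨w, hw⟩ := exists_completes v
    exact fun hu => Bool.false_ne_true ((hu w hw).symm.trans (hi w hw))
  unfold Gamma
  split_ifs <;> simp_all

theorem gamma_mono (D : ADF A) (h : ILE v v') : ILE (Gamma D v) (Gamma D v') := by
  intro a
  cases hv : Gamma D v a with
  | u => exact Or.inl rfl
  | t =>
    rw [gamma_eq_t_iff] at hv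
    exact Or.inr (gamma_eq_t_iff.2 fun w hw => hv w (hw.of_ile h)).symm
  | f =>
    rw [gamma_eq_f_iff] at hv
    exact Or.inr (gamma_eq_f_iff.2 fun w hw => hv w (hw.of_ile h)).symm

theorem gamma_restrictTV_eq_of_dependsOn {s : Set A} (hs : DependsOn (D.C a) s)
    (ha : Gamma D v a ≠ TV.u) : Gamma D (restrictTV v s) a = Gamma D v a := by
  have forced {c : Bool} (hc : ∀ w, Completes w v → D.C a w = c) (w : A → Bool)
      (hw : Completes w (restrictTV v s)) : D.C a w = c := by
    obtain ⟨w', hw', heq⟩ := hw.exists_eqOn_of_restrictTV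
    exact (hs heq).trans (hc w' hw')
  cases hv : Gamma D v a with
  | u => exact absurd hv ha
  | t => exact gamma_eq_t_iff.2 (forced (gamma_eq_t_iff.1 hv))
  | f => exact gamma_eq_f_iff.2 (forced (gamma_eq_f_iff.1 hv))

end CharacteristicOperator

section Parents

variable {A : Type*} [DecidableEq A] (D : ADF A) {a b : A}

theorem ADF.C_update_of_notMem_parents (hb : b ∉ D.parents a) (w : A → Bool) (c : Bool) :
    D.C a (Function.update w b c) = D.C a w := by
  have hflip : D.C a w = D.C a (Function.update w b (!w b)) :=
    not_not.1 fun h => hb ⟨w, h⟩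
  by_cases hc : c = w b
  · rw [hc, Function.update_eq_self]
  · rw [Bool.eq_not_of_ne hc, ← hflip]

theorem ADF.dependsOn_of_dependsOn_insert {s : Set A} (hb : b ∉ D.parents a)
    (h : DependsOn (D.C a) (insert b s)) : DependsOn (D.C a) s := by
  intro w w' hww'
  rw [← D.C_update_of_notMem_parents hb w (w' b)]
  refine h fun c hc => ?_
  by_cases hcb : c = b
  · rw [hcb, Function.update_self]
  · simpa [hcb] using hww' c (hc.resolve_left hcb)

theorem ADF.dependsOn_parents_of_finite {s : Set A} (hs : s.Finite) (h : DependsOn (D.C a) s) :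
    DependsOn (D.C a) (D.parents a) := by
  replace h : DependsOn (D.C a) (s ∪ D.parents a) := h.mono Set.subset_union_left
  induction s, hs using Set.Finite.induction_on with
  | empty => rwa [Set.empty_union] at h
  | @insert b s _ _ ih =>
    rw [Set.insert_union] at h
    by_cases hb : b ∈ D.parents a
    · exact ih (Set.insert_eq_of_mem (Set.mem_union_right s hb) ▸ h)
    · exact ih (D.dependsOn_of_dependsOn_insert hb h)

end Parents

section StrongJustification

variable {A : Type*} [DecidableEq A] {D : ADF A} {v v' : A → TV} {S S' E E' : Set A} {a : A}

theorem SJrel.of_gamma {P : Set A} (ha : v a ≠ TV.u) (hP : P ⊆ (D.parents a ∩ S) \ E)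
    (hforced : Gamma D (restrictTV v P) a = v a) (hrec : ∀ p ∈ P, SJrel D v S (E ∪ {p}) p) :
    SJrel D v S E a := by
  cases hv : v a with
  | u => exact absurd hv ha
  | t => exact .acc E a P hv hP (gamma_eq_t_iff.1 (hforced.trans hv)) hrec
  | f => exact .den E a P hv hP (gamma_eq_f_iff.1 (hforced.trans hv)) hrec

theorem SJrel.ne_u (h : SJrel D v S E a) : v a ≠ TV.u := by
  cases h <;> simp_all

/-- Treats acceptability and deniability at once: in both cases the value of `a` is the one that
`Γ_D` computes from `v|_P`. -/
@[elab_as_elim]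
theorem SJrel.gamma_induction {motive : ∀ E a, SJrel D v S E a → Prop}
    (step : ∀ (E : Set A) (a : A) (P : Set A) (ha : v a ≠ TV.u)
      (hP : P ⊆ (D.parents a ∩ S) \ E) (hforced : Gamma D (restrictTV v P) a = v a)
      (hrec : ∀ p ∈ P, SJrel D v S (E ∪ {p}) p),
      (∀ p (hp : p ∈ P), motive (E ∪ {p}) p (hrec p hp)) →
      motive E a (.of_gamma ha hP hforced hrec))
    (h : SJrel D v S E a) : motive E a h := by
  induction h with
  | acc E a P ha hP hirr hrec ih =>
    exact step E a P (by simp [ha]) hP ((gamma_eq_t_iff.2 hirr).trans ha.symm) hrec ih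
  | den E a P ha hP hunsat hrec ih =>
    exact step E a P (by simp [ha]) hP ((gamma_eq_f_iff.2 hunsat).trans ha.symm) hrec ih

theorem SJrel.gamma_eq (h : SJrel D v S E a) : Gamma D v a = v a := by
  induction h using SJrel.gamma_induction with
  | step E a P ha _ hforced _ _ =>
    rw [← hforced] at ha
    exact ((gamma_mono D (restrictTV_ile v P)).eq_of_ne_u ha).trans hforced

theorem SJrel.mono (h : SJrel D v S E a) (hv : ILE v v') (hS : S ⊆ S') : SJrel D v' S' E a := by
  induction h using SJrel.gamma_induction with
  | step E a P ha hP hforced _ ih =>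
    have hval : v' a = v a := hv.eq_of_ne_u ha
    refine .of_gamma (hval ▸ ha) (hP.trans (by gcongr)) ?_ ih
    rw [hval, ← hforced]
    exact (gamma_mono D (restrictTV_mono hv fun _ hp _ => hp)).eq_of_ne_u (hforced ▸ ha)

theorem SJrel.of_decided_excluded (h : SJrel D v S E a) (hE : ∀ e ∈ E', v e ≠ TV.u → e ∈ E) :
    SJrel D v S E' a := by
  induction h using SJrel.gamma_induction generalizing E' with
  | step E a P ha hP hforced hrec ih =>
    refine .of_gamma ha (fun p hp => ⟨(hP hp).1, fun hp' => ?_⟩) hforced fun p hp => ih p hp ?_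
    · exact (hP hp).2 (hE p hp' (hrec p hp).ne_u)
    · exact fun e he hu => he.imp_left fun he' => hE e he' hu

end StrongJustification

section StrongAdmissibility

variable {A : Type*} [DecidableEq A] {D : ADF A} {v : A → TV}

theorem stronglyAdmissible_trivialInterp (D : ADF A) : StronglyAdmissible D (trivialInterp A) :=
  fun _ ha => absurd rfl ha

theorem StronglyAdmissible.admissible (h : StronglyAdmissible D v) : Admissible D v := by
  intro a
  by_cases ha : v a = TV.u
  · exact Or.inl ha
  · obtain ⟨S, hS⟩ := h a ha
    exact Or.inr hS.gamma_eq.symm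

theorem StronglyAdmissible.stronglyJustified_gamma_of_eq_u (h : StronglyAdmissible D v) {a : A}
    (hD : DependsOn (D.C a) (D.parents a)) (hva : v a = TV.u) (ha : Gamma D v a ≠ TV.u) :
    StronglyJustified D (Gamma D v) Set.univ a := by
  have hle : ILE v (Gamma D v) := h.admissible
  refine .of_gamma (P := {b ∈ D.parents a | v b ≠ TV.u}) ha ?_ ?_ ?_
  · rintro b ⟨hb, hvb⟩
    exact ⟨⟨hb, trivial⟩, fun hba => hvb (hba ▸ hva)⟩
  · have hparents : Gamma D (restrictTV v (D.parents a)) a = Gamma D v a :=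
      gamma_restrictTV_eq_of_dependsOn hD ha
    have hdecided : ILE (restrictTV v (D.parents a))
        (restrictTV (Gamma D v) {b ∈ D.parents a | v b ≠ TV.u}) :=
      restrictTV_mono hle fun _ hb hvb => ⟨hb, hvb⟩
    exact ((gamma_mono D hdecided).eq_of_ne_u (hparents ▸ ha)).trans hparents
  · rintro p ⟨-, hvp⟩
    obtain ⟨S, hS⟩ := h p hvp
    have hexcl : ∀ e ∈ ({a} ∪ {p} : Set A), v e ≠ TV.u → e ∈ ({p} : Set A) :=
      fun e he hve => he.resolve_left fun hea => hve (hea ▸ hva)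
    exact (hS.of_decided_excluded hexcl).mono hle S.subset_univ

theorem StronglyAdmissible.gamma (hD : ∀ a, DependsOn (D.C a) (D.parents a))
    (h : StronglyAdmissible D v) : StronglyAdmissible D (Gamma D v) := by
  intro a ha
  by_cases hva : v a = TV.u
  · exact ⟨Set.univ, h.stronglyJustified_gamma_of_eq_u (hD a) hva ha⟩
  · obtain ⟨S, hS⟩ := h a hva
    exact ⟨S, hS.mono h.admissible subset_rfl⟩

end StrongAdmissibility

/-- `hD` says that the parents of `a`, which are found by flipping one argument at a time, capture
every dependence of `D.C a`. For infinite `A` they may not: "infinitely many arguments are true" has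
no parents. -/
theorem gamma_iterates_strongly_admissible_general {A : Type*} [DecidableEq A]
    (D : ADF A) (hD : ∀ a, DependsOn (D.C a) (D.parents a)) (vseq : ℕ → A → TV)
    (h0 : vseq 0 = trivialInterp A) (hstep : ∀ i : ℕ, vseq (i + 1) = Gamma D (vseq i)) :
    ∀ i : ℕ, StronglyAdmissible D (vseq i) := by
  intro i
  induction i with
  | zero => exact h0 ▸ stronglyAdmissible_trivialInterp D
  | succ i ih => exact hstep i ▸ ih.gamma hD

/-- Every member of the sequence v_0 = v_u, v_{i+1} = Γ_D(v_i)
is a strongly admissible interpretation. -/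
theorem gamma_iterates_strongly_admissible {A : Type*} [Fintype A] [DecidableEq A]
    (D : ADF A) (vseq : ℕ → A → TV) (h0 : vseq 0 = trivialInterp A)
    (hstep : ∀ i : ℕ, vseq (i + 1) = Gamma D (vseq i)) :
    ∀ i : ℕ, StronglyAdmissible D (vseq i) :=
  gamma_iterates_strongly_admissible_general D
    (fun _ => D.dependsOn_parents_of_finite Set.finite_univ (dependsOn_univ _)) vseq h0 hstep
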